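/- Let a ∈ ℤ, let 1 < α < 2, let λ be a real number with -1 < λ < 0, and let 0 < σ < α - 1. Then the series ∑_{k=1}^∞ ₐ∇ₖ^{-σ} F_{α,1}(λ,k+a,a) (the sum over k ∈ ℕ_{a+1} of the σ-th nabla fractional sum of the discrete Mittag–Leffler function F_{α,1}(λ,·,a) evaluated at k) converges and equals 0. -/

import Mathlib

/-!
The proof works with generating series in `n = k - a - 1`. The coefficients of
`(1 - X) ^ (-s)` are `Γ(n + s) / (Γ(s) Γ(n + 1))` for `s > 0`, so the Mittag–Leffler function has
generating series `M = ∑ⱼ λʲ (1 - X) ^ (-(jα + 1))`, and the `σ`-th fractional sum multiplies it by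
`(1 - X) ^ (-σ)`. Applying Vandermonde's convolution to each coefficient gives
`((1 - X) ^ α - λ) M = (1 - X) ^ (α - 1)` (`negBinom_mul_mlSeries`). Hence the series to be summed
is the value at `X = 1` of
`H = (1 - X) ^ s · ((1 - X) ^ α - λ)⁻¹`, where `s = α - 1 - σ ∈ (0, 1)`.

Both factors have absolutely summable coefficients. For `(1 - X) ^ s` the coefficients sum to `0`
(`hasSum_multichoose_neg`). For the reciprocal (`exists_summable_inverse`): `1 - z` has argument at
most `π / 2` in absolute value on the closed unit disc, so `(1 - z) ^ α` is never a negative real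
number when `α < 2`, and by compactness `(1 - z) ^ α - λ` is bounded away from `0`. As `α > 1`, the
reciprocal has a bounded derivative on the disc; Parseval's inequality makes `n gₙ` square summable,
and then `∑ |gₙ| < ∞` follows by comparing with `∑ 1 / n²`. The Cauchy product theorem
concludes: the coefficients of `H` are summable, with sum `(∑ gₙ) · 0 = 0`.
-/

/-- The rising function `p^{q̄} = Γ(p+q)/Γ(p)`. -/
noncomputable def rise (p : ℤ) (q : ℝ) : ℝ :=
  Real.Gamma ((p : ℝ) + q) / Real.Gamma (p : ℝ)

/-- The discrete Mittag–Leffler function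
`F_{α,β}(λ,k,a) = ∑_{j=0}^∞ λ^j (k-a)^{\overline{jα+β-1}}/Γ(jα+β)`. -/
noncomputable def discML (α β lam : ℝ) (k a : ℤ) : ℝ :=
  ∑' j : ℕ, lam ^ j * rise (k - a) ((j : ℝ) * α + β - 1) / Real.Gamma ((j : ℝ) * α + β)


/-- The `σ`-th nabla fractional sum
`ₐ∇ₖ^{-σ} f(k) = ∑_{j=0}^{k-a-1} (Γ(j+σ)/(Γ(σ)Γ(j+1))) f(k-j)`. -/
noncomputable def nsum (a : ℤ) (σ : ℝ) (f : ℤ → ℝ) (k : ℤ) : ℝ :=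
  ∑ j ∈ Finset.range (k - a).toNat,
    (Real.Gamma ((j : ℝ) + σ) / (Real.Gamma σ * Real.Gamma ((j : ℝ) + 1))) * f (k - j)

/-! ### Coefficients of powers of `1 - X` -/

/-- The formal power series of `(1 - X) ^ (-s)`, with `n`-th coefficient
`Ring.multichoose s n = s (s + 1) ⋯ (s + n - 1) / n!`. -/
noncomputable def negBinom (s : ℝ) : PowerSeries ℝ :=
  PowerSeries.mk fun n => Ring.multichoose s n

lemma negBinom_eq_rescale (s : ℝ) :
    negBinom s = PowerSeries.rescale (-1 : ℝ) (PowerSeries.binomialSeries ℝ (-s)) := by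
  ext n
  rw [negBinom, PowerSeries.coeff_mk, PowerSeries.coeff_rescale, PowerSeries.binomialSeries_coeff,
    Ring.choose_neg, Ring.multichoose_eq, Units.smul_def]
  simp [← mul_assoc, ← pow_add]

lemma negBinom_add (s t : ℝ) : negBinom (s + t) = negBinom s * negBinom t := by
  simp only [negBinom_eq_rescale, neg_add, PowerSeries.binomialSeries_add, map_mul]

lemma multichoose_succ_mul (s : ℝ) (n : ℕ) :
    (n + 1 : ℝ) * Ring.multichoose s (n + 1) = (s + n) * Ring.multichoose s n := by
  have h (m : ℕ) : (m.factorial : ℝ) * Ring.multichoose s m = (ascPochhammer ℝ m).eval s := by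
    rw [← nsmul_eq_mul, Ring.factorial_nsmul_multichoose_eq_ascPochhammer,
      Polynomial.ascPochhammer_smeval_eq_eval]
  have h1 := h (n + 1)
  rw [ascPochhammer_succ_eval, ← h n, Nat.factorial_succ] at h1
  have : (n.factorial : ℝ) ≠ 0 := by positivity
  push_cast at h1
  apply mul_left_cancel₀ this
  linear_combination h1

lemma multichoose_pos {s : ℝ} (hs : 0 < s) (n : ℕ) : 0 < Ring.multichoose s n := by
  induction n with
  | zero => simp
  | succ n ih =>
    have h := multichoose_succ_mul s n
    have : 0 < (n + 1 : ℝ) * Ring.multichoose s (n + 1) := by rw [h]; positivity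
    exact pos_of_mul_pos_right this (by positivity)

lemma multichoose_eq_Gamma {s : ℝ} (hs : 0 < s) (n : ℕ) :
    Ring.multichoose s n = Real.Gamma (n + s) / (Real.Gamma s * Real.Gamma (n + 1)) := by
  have h0 := Real.Gamma_pos_of_pos hs
  induction n with
  | zero => simp [h0.ne']
  | succ n ih =>
    have h := multichoose_succ_mul s n
    have h1 : (0 : ℝ) < n + 1 := by positivity
    have h2 : (0 : ℝ) < n + s := by positivity
    have h3 := Real.Gamma_pos_of_pos h1
    push_cast
    rw [Real.Gamma_add_one h1.ne', show (n : ℝ) + 1 + s = (n + s) + 1 by ring,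
      Real.Gamma_add_one h2.ne']
    rw [ih] at h
    field_simp at h ⊢
    linear_combination h

/-- The telescoping relation `(1 - X) ^ s / (1 - X) = (1 - X) ^ (s - 1)`, read off coefficientwise. -/
lemma sum_range_multichoose (s : ℝ) (n : ℕ) :
    ∑ k ∈ Finset.range (n + 1), Ring.multichoose (-s) k = Ring.multichoose (1 - s) n := by
  have h := congrArg (PowerSeries.coeff n) (negBinom_add (-s) 1)
  rw [PowerSeries.coeff_mul, Finset.Nat.sum_antidiagonal_eq_sum_range_succ
    (fun i j => PowerSeries.coeff i (negBinom (-s)) * PowerSeries.coeff j (negBinom 1))] at h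
  simp only [negBinom, PowerSeries.coeff_mk, Ring.multichoose_one, mul_one] at h
  rw [← h]
  congr 1
  ring

lemma multichoose_neg_succ_mul (s : ℝ) (n : ℕ) :
    (n + 1 : ℝ) * Ring.multichoose (-s) (n + 1) = -s * Ring.multichoose (1 - s) n := by
  induction n with
  | zero => simp
  | succ n ih =>
    have h1 := multichoose_succ_mul (-s) (n + 1)
    have h2 := multichoose_succ_mul (1 - s) n
    have : (n + 1 : ℝ) ≠ 0 := by positivity
    push_cast at h1 ⊢
    apply mul_left_cancel₀ this
    linear_combination (n + 1 : ℝ) * h1 + (-s + (n + 1)) * ih + s * h2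

/-- The coefficients of `(1 - X) ^ s` are summable and sum to the value `0` at `X = 1`. -/
lemma hasSum_multichoose_neg {s : ℝ} (hs : 0 < s) (hs1 : s < 1) :
    HasSum (fun n => Ring.multichoose (-s) n) 0 := by
  have hpos (n : ℕ) : 0 < Ring.multichoose (1 - s) n := multichoose_pos (by linarith) n
  have hval (n : ℕ) :
      -Ring.multichoose (-s) (n + 1) = s / (n + 1) * Ring.multichoose (1 - s) n := by
    have := multichoose_neg_succ_mul s n
    field_simp
    linear_combination -this
  have hpart (n : ℕ) : ∑ k ∈ Finset.range n, -Ring.multichoose (-s) (k + 1)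
      = 1 - Ring.multichoose (1 - s) n := by
    rw [← sum_range_multichoose s n, Finset.sum_range_succ', Finset.sum_neg_distrib]
    simp
  have hsum : Summable (fun n => -Ring.multichoose (-s) (n + 1)) := by
    refine summable_of_sum_range_le (c := 1) (fun n => ?_) (fun n => ?_)
    · rw [hval]
      have := hpos n
      positivity
    · rw [hpart]
      linarith [hpos n]
  have hsum' : Summable (fun n => Ring.multichoose (-s) n) :=
    (summable_nat_add_iff 1).1 hsum.of_neg
  obtain ⟨L, hL⟩ := hsum'
  have hlim : Filter.Tendsto (fun n => Ring.multichoose (1 - s) n) Filter.atTop (nhds L) := by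
    have := hL.tendsto_sum_nat.comp (Filter.tendsto_add_atTop_nat 1)
    refine this.congr fun n => ?_
    exact sum_range_multichoose s n
  -- The partial sums decrease to `L`; a positive `L` would make the harmonic series converge.
  have hanti : Antitone (fun n => Ring.multichoose (1 - s) n) := by
    refine antitone_nat_of_succ_le fun n => ?_
    rw [← sum_range_multichoose s (n + 1), Finset.sum_range_succ, sum_range_multichoose]
    have h1 := hval n
    have h2 : 0 ≤ s / (n + 1) * Ring.multichoose (1 - s) n := by
      have := hpos n
      positivity
    linarith
  have hLn (n : ℕ) : L ≤ Ring.multichoose (1 - s) n := hanti.le_of_tendsto hlim n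
  have hL0 : 0 ≤ L := ge_of_tendsto' hlim fun n => (hpos n).le
  rcases hL0.eq_or_lt with h | h
  · rwa [h]
  · exfalso
    have hdiv : Summable (fun n : ℕ => s * L * (1 / ((n + 1 : ℕ) : ℝ))) := by
      refine Summable.of_nonneg_of_le (fun n => by positivity) (fun n => ?_) hsum
      rw [hval]
      push_cast
      calc s * L * (1 / (n + 1 : ℝ)) = s / (n + 1) * L := by ring
        _ ≤ _ := by
          have := hLn n
          gcongr
    rw [summable_mul_left_iff (by positivity),
      summable_nat_add_iff (f := fun n : ℕ => 1 / (n : ℝ)) 1] at hdiv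
    exact Real.not_summable_one_div_natCast hdiv

/-! ### The generating series of the Mittag–Leffler function -/

/-- Convergence of the Mittag–Leffler series. The extra weight `j ^ p` makes the induction on
`n` go through, since each step multiplies the terms by a linear polynomial in `j`. -/
lemma summable_pow_mul_multichoose (α : ℝ) {lam : ℝ} (hlam : |lam| < 1) (n : ℕ) : ∀ p : ℕ,
    Summable fun j : ℕ => (j : ℝ) ^ p * (lam ^ j * Ring.multichoose ((j : ℝ) * α + 1) n) := by
  induction n with
  | zero =>
    intro p
    simpa using summable_pow_mul_geometric_of_norm_lt_one (R := ℝ) p (by simpa using hlam)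
  | succ n ih =>
    intro p
    refine (((ih (p + 1)).mul_left (α / (n + 1))).add
      ((ih p).mul_left ((1 + n : ℝ) / (n + 1)))).congr fun j => ?_
    have h := multichoose_succ_mul ((j : ℝ) * α + 1) n
    have h' : Ring.multichoose ((j : ℝ) * α + 1) (n + 1) =
        ((j : ℝ) * α + 1 + n) * Ring.multichoose ((j : ℝ) * α + 1) n / (n + 1) := by
      field_simp
      linear_combination h
    rw [h', pow_succ]
    field_simp
    ring

/-- The generating series `∑ F_{α,1}(λ, a + 1 + n, a) Xⁿ` of the discrete Mittag–Leffler function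
(see `discML_eq_coeff`). -/
noncomputable def mlSeries (α lam : ℝ) : PowerSeries ℝ :=
  PowerSeries.mk fun n => ∑' j : ℕ, lam ^ j * Ring.multichoose ((j : ℝ) * α + 1) n

lemma discML_eq_coeff {α : ℝ} (hα : 0 < α) (lam : ℝ) (a : ℤ) (n : ℕ) :
    discML α 1 lam (a + 1 + n) a = PowerSeries.coeff n (mlSeries α lam) := by
  rw [mlSeries, PowerSeries.coeff_mk, discML]
  refine tsum_congr fun j => ?_
  rw [multichoose_eq_Gamma (by positivity), rise]
  have h : ((a + 1 + n - a : ℤ) : ℝ) = n + 1 := by push_cast; ring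
  rw [h, show (n : ℝ) + 1 + (j * α + 1 - 1) = n + (j * α + 1) by ring]
  rw [mul_div_assoc, div_div, mul_comm (Real.Gamma (n + 1 : ℝ))]

lemma nsum_eq_coeff {α σ : ℝ} (hα : 0 < α) (hσ : 0 < σ) (lam : ℝ) (a : ℤ) (k : ℕ) :
    nsum a σ (fun m => discML α 1 lam m a) (a + 1 + k) =
      PowerSeries.coeff k (negBinom σ * mlSeries α lam) := by
  rw [PowerSeries.coeff_mul, Finset.Nat.sum_antidiagonal_eq_sum_range_succ
    (fun i j => PowerSeries.coeff i (negBinom σ) * PowerSeries.coeff j (mlSeries α lam)), nsum]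
  have h : (a + 1 + k - a : ℤ).toNat = k.succ := by omega
  rw [h]
  refine Finset.sum_congr rfl fun j hj => ?_
  have hj' : j ≤ k := by simpa [Nat.lt_succ_iff] using hj
  rw [← discML_eq_coeff hα lam a, negBinom, PowerSeries.coeff_mk, multichoose_eq_Gamma hσ]
  congr 2
  push_cast [hj']
  ring

/-- The functional equation `(1 - X) ^ α · M = (1 - X) ^ (α - 1) + λ M` of the generating series
`M = ∑ⱼ λʲ (1 - X) ^ (-(jα + 1))`. -/
lemma negBinom_mul_mlSeries (α : ℝ) {lam : ℝ} (hlam : |lam| < 1) :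
    negBinom (-α) * mlSeries α lam = negBinom (1 - α) + PowerSeries.C lam * mlSeries α lam := by
  have hs (n : ℕ) : Summable fun j : ℕ => lam ^ j * Ring.multichoose ((j : ℝ) * α + 1) n := by
    simpa using summable_pow_mul_multichoose α hlam n 0
  ext n
  have hconv (j : ℕ) : ∑ x ∈ Finset.HasAntidiagonal.antidiagonal n, Ring.multichoose (-α) x.1 *
      (lam ^ j * Ring.multichoose ((j : ℝ) * α + 1) x.2) =
      lam ^ j * Ring.multichoose ((j : ℝ) * α + 1 - α) n := by
    have h := congrArg (PowerSeries.coeff n) (negBinom_add (-α) ((j : ℝ) * α + 1))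
    rw [PowerSeries.coeff_mul] at h
    simp only [negBinom, PowerSeries.coeff_mk] at h
    rw [show (j : ℝ) * α + 1 - α = -α + (j * α + 1) by ring, h, Finset.mul_sum]
    exact Finset.sum_congr rfl fun x _ => by ring
  have hleft : HasSum (fun j : ℕ => lam ^ j * Ring.multichoose ((j : ℝ) * α + 1 - α) n)
      (PowerSeries.coeff n (negBinom (-α) * mlSeries α lam)) := by
    have h := hasSum_sum (s := Finset.HasAntidiagonal.antidiagonal n) fun i _ =>
      (hs i.2).hasSum.mul_left (Ring.multichoose (-α) i.1)
    simp only [hconv] at h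
    rw [PowerSeries.coeff_mul]
    simpa only [negBinom, mlSeries, PowerSeries.coeff_mk] using h
  have hterm (j : ℕ) :
      lam ^ (j + 1) * Ring.multichoose (((j + 1 : ℕ) : ℝ) * α + 1 - α) n =
        lam * (lam ^ j * Ring.multichoose ((j : ℝ) * α + 1) n) := by
    push_cast
    rw [show ((j : ℝ) + 1) * α + 1 - α = j * α + 1 by ring]
    ring
  rw [← hleft.tsum_eq, hleft.summable.tsum_eq_zero_add, tsum_congr hterm, tsum_mul_left, map_add,
    PowerSeries.coeff_C_mul, negBinom, mlSeries, PowerSeries.coeff_mk, PowerSeries.coeff_mk]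
  simp

/-! ### Absolute summability for the reciprocal -/

lemma hasSum_of_eq {f f' : ℕ → ℂ} {a : ℂ} (h : HasSum f' a) (e : ∀ n, f n = f' n) :
    HasSum f a := by
  rwa [funext e]

/-- Parseval's inequality on the disc: the Taylor coefficients of a function bounded by `M` on the
open unit disc satisfy `∑ |cₙ|² ≤ M²`. -/
lemma sum_sq_coeff_le {c : ℕ → ℂ} {φ : ℂ → ℂ} {M : ℝ}
    (h : ∀ z : ℂ, ‖z‖ < 1 → HasSum (fun n => c n * z ^ n) (φ z))
    (hb : ∀ z : ℂ, ‖z‖ < 1 → ‖φ z‖ ≤ M) (s : Finset ℕ) :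
    ∑ n ∈ s, ‖c n‖ ^ 2 ≤ M ^ 2 := by
  have hM : 0 ≤ M := (norm_nonneg _).trans (hb 0 (by simp))
  -- Bessel's inequality on the circle of radius `r < 1`.
  have key (r : ℝ) (hr0 : 0 ≤ r) (hr1 : r < 1) :
      ∑ n ∈ s, ‖c n * (r : ℂ) ^ n‖ ^ 2 ≤ M ^ 2 := by
    have hnr : ‖(r : ℂ)‖ < 1 := by simpa [abs_of_nonneg hr0] using hr1
    let u : ℕ → C(AddCircle (1 : ℝ), ℂ) := fun n => (c n * (r : ℂ) ^ n) • fourier (n : ℤ)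
    have hu : Summable u := by
      refine Summable.of_norm ?_
      refine (h r hnr).summable.norm.congr fun n => ?_
      rw [norm_smul, fourier_norm, mul_one]
    let U := ∑' n, u n
    have hU : HasSum u U := hu.hasSum
    have hUnorm : ‖U‖ ≤ M := by
      rw [ContinuousMap.norm_le _ hM]
      intro x
      have hx : ‖(r : ℂ) * (AddCircle.toCircle x : ℂ)‖ < 1 := by
        rw [norm_mul, Circle.norm_coe, mul_one]
        exact hnr
      have h1 : HasSum (fun n => u n x) (U x) :=
        hU.map (ContinuousMap.evalCLM ℂ x) (ContinuousMap.evalCLM ℂ x).continuous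
      have h2 : (fun n => u n x) =
          fun n => c n * ((r : ℂ) * (AddCircle.toCircle x : ℂ)) ^ n := by
        funext n
        simp [u, fourier_apply, AddCircle.toCircle_nsmul, mul_pow, mul_assoc]
      rw [h2] at h1
      rw [h1.unique (h _ hx)]
      exact hb _ hx
    let T := ContinuousMap.toLp (E := ℂ) 2 (AddCircle.haarAddCircle (T := (1 : ℝ))) ℂ
    have hTnorm : ‖T U‖ ≤ M := by
      have h1 : ‖T‖ ≤ 1 := by
        simpa [MeasureTheory.measureUnivNNReal] using
          ContinuousMap.toLp_norm_le (E := ℂ) (p := 2) (𝕜 := ℂ)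
            (AddCircle.haarAddCircle (T := (1 : ℝ)))
      calc ‖T U‖ ≤ ‖T‖ * ‖U‖ := T.le_opNorm U
        _ ≤ 1 * M := by gcongr
        _ = M := one_mul M
    have horth := orthonormal_fourier (T := (1 : ℝ))
    have hcoef (m : ℕ) : inner ℂ (fourierLp (T := (1 : ℝ)) 2 (m : ℤ)) (T U) = c m * (r : ℂ) ^ m := by
      have h1 := (hU.mapL T).mapL (innerSL ℂ (fourierLp (T := (1 : ℝ)) 2 (m : ℤ)))
      have h2 (n : ℕ) : innerSL ℂ (fourierLp (T := (1 : ℝ)) 2 (m : ℤ)) (T (u n)) =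
          if n = m then c m * (r : ℂ) ^ m else 0 := by
        have : T (u n) = (c n * (r : ℂ) ^ n) • fourierLp (T := (1 : ℝ)) 2 (n : ℤ) := by
          simp only [u, map_smul]
          rfl
        rw [this, map_smul, innerSL_apply_apply, orthonormal_iff_ite.1 horth]
        by_cases hnm : n = m
        · simp [hnm]
        · have : ¬ m = n := fun h => hnm h.symm
          simp [hnm, this]
      simp only [h2] at h1
      have h3 := h1.unique (hasSum_ite_eq m (c m * (r : ℂ) ^ m))
      simpa using h3
    have hbes := (horth.comp (fun n : ℕ => (n : ℤ)) Nat.cast_injective).sum_inner_products_le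
      (T U) (s := s)
    simp only [Function.comp_apply, hcoef] at hbes
    exact hbes.trans (by gcongr)
  have hcont : Filter.Tendsto (fun r : ℝ => ∑ n ∈ s, ‖c n * (r : ℂ) ^ n‖ ^ 2)
      (nhdsWithin 1 (Set.Iio 1)) (nhds (∑ n ∈ s, ‖c n‖ ^ 2)) := by
    have : Continuous (fun r : ℝ => ∑ n ∈ s, ‖c n * (r : ℂ) ^ n‖ ^ 2) := by fun_prop
    simpa using (this.tendsto 1).mono_left nhdsWithin_le_nhds
  refine le_of_tendsto hcont ?_
  filter_upwards [Ioo_mem_nhdsLT (show (0 : ℝ) < 1 by norm_num)] with r hr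
  exact key r hr.1.le hr.2

/-- Square summability of `n gₙ` gives absolute summability of `g`, by comparing
`|gₙ| = (n |gₙ|) (1 / n)` with `(n |gₙ|)² + 1 / n²`. -/
lemma summable_norm_of_sum_sq_le {g : ℕ → ℂ} {C : ℝ}
    (h : ∀ s : Finset ℕ, ∑ n ∈ s, ‖((n : ℂ) + 1) * g (n + 1)‖ ^ 2 ≤ C) :
    Summable fun n => ‖g n‖ := by
  rw [← summable_nat_add_iff 1]
  have h1 : Summable fun n : ℕ => ‖((n : ℂ) + 1) * g (n + 1)‖ ^ 2 :=
    summable_of_sum_le (fun n => by positivity) h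
  have h2 : Summable fun n : ℕ => 1 / ((n + 1 : ℕ) : ℝ) ^ 2 :=
    (summable_nat_add_iff 1).2 (Real.summable_one_div_nat_pow.2 (by norm_num))
  refine Summable.of_nonneg_of_le (fun n => norm_nonneg _) (fun n => ?_) (h1.add h2)
  have h3 : ‖((n : ℂ) + 1)‖ = ((n + 1 : ℕ) : ℝ) := by
    rw [← Complex.norm_natCast]
    push_cast
    rfl
  rw [norm_mul, h3]
  set x := ‖g (n + 1)‖
  have hN : (0 : ℝ) < ((n + 1 : ℕ) : ℝ) := by positivity
  set N := ((n + 1 : ℕ) : ℝ)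
  have h4 : x = (N * x) * (1 / N) := by field_simp
  have h5 : 1 / N ^ 2 = (1 / N) ^ 2 := by ring
  rw [h5]
  nlinarith [sq_nonneg (N * x - 1 / N), sq_nonneg (N * x), sq_nonneg (1 / N)]

/-- On the closed disc `|arg ((1 - z) ^ α)| ≤ πα / 2 < π`, so no negative real value is taken. -/
lemma one_sub_cpow_ne {α lam : ℝ} (hα0 : 1 < α) (hα1 : α < 2) (hlam : lam < 0) {z : ℂ}
    (hz : ‖z‖ ≤ 1) : (1 - z) ^ (α : ℂ) - lam ≠ 0 := by
  intro h
  have h' : (1 - z) ^ (α : ℂ) = lam := sub_eq_zero.1 h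
  by_cases h0 : 1 - z = 0
  · rw [h0, Complex.zero_cpow (by exact_mod_cast (by linarith : α ≠ 0))] at h'
    have : (0 : ℝ) = lam := by exact_mod_cast h'
    linarith
  have hre : 0 ≤ (1 - z).re := by
    have := (Complex.re_le_norm z).trans hz
    simpa using this
  have harg := Complex.abs_arg_le_pi_div_two_iff.2 hre
  have hpi := Real.pi_pos
  have him : (Complex.log (1 - z) * α).im = (1 - z).arg * α := by
    simp [Complex.log_im]
  have hlt : |(1 - z).arg * α| < Real.pi := by
    rw [abs_mul, abs_of_pos (by linarith : 0 < α)]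
    nlinarith [abs_nonneg (1 - z).arg]
  rw [abs_lt] at hlt
  have h2 : Complex.log ((1 - z) ^ (α : ℂ)) = Complex.log (1 - z) * α := by
    rw [Complex.cpow_def_of_ne_zero h0, Complex.log_exp] <;> rw [him] <;> linarith
  have h3 := congrArg Complex.im h2
  rw [him, Complex.log_im, h', Complex.arg_ofReal_of_neg hlam] at h3
  linarith

lemma hasSum_one_sub_cpow (α : ℝ) {z : ℂ} (hz : ‖z‖ < 1) :
    HasSum (fun n => ((Ring.multichoose (-α) n : ℝ) : ℂ) * z ^ n) ((1 - z) ^ (α : ℂ)) := by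
  have h := (Complex.one_div_one_sub_cpow_hasFPowerSeriesOnBall_zero (-(α : ℂ))).hasSum
    (y := z) (by simpa [Metric.mem_eball, edist_zero_right, ← ofReal_norm] using hz)
  have hc (n : ℕ) : ((Ring.multichoose (-α) n : ℝ) : ℂ) = Ring.choose (-(α : ℂ) + n - 1) n := by
    rw [Ring.multichoose_eq, Complex.ofReal_choose]
    push_cast
    rfl
  simp only [hc]
  simpa [Complex.cpow_neg, FormalMultilinearSeries.ofScalars_apply_eq, mul_comm] using h

/-- A Wiener-type lemma for `(1 - z) ^ α - λ`: its reciprocal has absolutely summable Taylor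
coefficients, because the derivative of the reciprocal is bounded on the disc. -/
lemma exists_summable_inverse {α lam : ℝ} (hα0 : 1 < α) (hα1 : α < 2) (hlam : lam < 0) :
    ∃ g : ℕ → ℂ, (Summable fun n => ‖g n‖) ∧
      (PowerSeries.map Complex.ofRealHom (negBinom (-α) - PowerSeries.C lam)) *
        PowerSeries.mk g = 1 := by
  let F : ℂ → ℂ := fun z => (1 - z) ^ (α : ℂ) - lam
  have hslit {z : ℂ} (hz : ‖z‖ < 1) : 1 - z ∈ Complex.slitPlane := by
    left
    have := (Complex.re_le_norm z).trans_lt hz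
    simpa using this
  have hFne {z : ℂ} (hz : ‖z‖ ≤ 1) : F z ≠ 0 := one_sub_cpow_ne hα0 hα1 hlam hz
  have hFd {z : ℂ} (hz : ‖z‖ < 1) :
      HasDerivAt F (-(α * (1 - z) ^ ((α : ℂ) - 1))) z := by
    have h1 : HasDerivAt (fun z : ℂ => 1 - z) (-1) z := by
      simpa using (hasDerivAt_id z).const_sub 1
    have h2 := (h1.cpow_const (c := (α : ℂ)) (hslit hz)).sub_const (lam : ℂ)
    rwa [mul_neg_one] at h2
  obtain ⟨m, hm0, hm⟩ : ∃ m : ℝ, 0 < m ∧ ∀ z : ℂ, ‖z‖ ≤ 1 → m ≤ ‖F z‖ := by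
    have hc : ContinuousOn (fun z => ‖F z‖) (Metric.closedBall 0 1) := by
      refine ContinuousOn.norm (ContinuousOn.sub ?_ continuousOn_const)
      intro z hz
      have hz' : ‖z‖ ≤ 1 := by simpa using hz
      have hre : 0 ≤ (1 - z).re := by
        have := (Complex.re_le_norm z).trans hz'
        simpa using this
      have h1 : ContinuousAt (fun w : ℂ => w ^ (α : ℂ)) (1 - z) :=
        Complex.continuousAt_cpow_const_of_re_pos (Or.inl hre) (by simp; linarith)
      have h2 : ContinuousAt (fun z : ℂ => 1 - z) z := by fun_prop
      exact (ContinuousAt.comp (f := fun z : ℂ => 1 - z) h1 h2).continuousWithinAt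
    obtain ⟨z₀, hz₀, hmin⟩ := (isCompact_closedBall (0 : ℂ) 1).exists_isMinOn
      ⟨0, by simp⟩ hc
    refine ⟨‖F z₀‖, norm_pos_iff.2 (hFne (by simpa using hz₀)), fun z hz => ?_⟩
    exact hmin (by simpa using hz : z ∈ Metric.closedBall (0 : ℂ) 1)
  let G : ℂ → ℂ := fun z => (F z)⁻¹
  have hGd {z : ℂ} (hz : ‖z‖ < 1) :
      HasDerivAt G (α * (1 - z) ^ ((α : ℂ) - 1) / F z ^ 2) z := by
    simpa using (hFd hz).fun_inv (hFne hz.le)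
  have hGdiff : DifferentiableOn ℂ G (Metric.ball 0 1) := fun z hz =>
    (hGd (by simpa using hz)).differentiableAt.differentiableWithinAt
  have hG'diff : DifferentiableOn ℂ (deriv G) (Metric.ball 0 1) :=
    hGdiff.deriv Metric.isOpen_ball
  let g : ℕ → ℂ := fun n => (n.factorial : ℂ)⁻¹ * iteratedDeriv n G 0
  have hGsum (z : ℂ) (hz : ‖z‖ < 1) : HasSum (fun n => g n * z ^ n) (G z) := by
    have h := Complex.hasSum_taylorSeries_on_ball hGdiff (z := z) (by simpa using hz)
    refine hasSum_of_eq h fun n => ?_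
    simp only [g, sub_zero, smul_eq_mul]
    ring
  have hG'sum (z : ℂ) (hz : ‖z‖ < 1) :
      HasSum (fun n : ℕ => (((n : ℂ) + 1) * g (n + 1)) * z ^ n) (deriv G z) := by
    have h := Complex.hasSum_taylorSeries_on_ball hG'diff (z := z) (by simpa using hz)
    refine hasSum_of_eq h fun n => ?_
    have h1 : ((n : ℂ) + 1) ≠ 0 := by exact_mod_cast n.succ_ne_zero
    simp only [g, sub_zero, smul_eq_mul, iteratedDeriv_succ', Nat.factorial_succ]
    push_cast
    field_simp
  have hG'bd (z : ℂ) (hz : ‖z‖ < 1) : ‖deriv G z‖ ≤ α * 2 ^ (α - 1) / m ^ 2 := by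
    have h0 : 1 - z ≠ 0 := Complex.slitPlane_ne_zero (hslit hz)
    have h2 : ‖1 - z‖ ≤ 2 := by
      have := norm_sub_le (1 : ℂ) z
      rw [norm_one] at this
      linarith
    have h3 : ‖(1 - z) ^ ((α : ℂ) - 1)‖ ≤ 2 ^ (α - 1) := by
      have h4 : ((α : ℂ) - 1) = ((α - 1 : ℝ) : ℂ) := by push_cast; rfl
      rw [h4, Complex.norm_cpow_real]
      exact Real.rpow_le_rpow (norm_nonneg _) h2 (by linarith)
    rw [(hGd hz).deriv, norm_div, norm_mul, norm_pow, Complex.norm_real, Real.norm_eq_abs,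
      abs_of_pos (by linarith : 0 < α)]
    have := hm z hz.le
    gcongr
  refine ⟨g, summable_norm_of_sum_sq_le (sum_sq_coeff_le hG'sum hG'bd), ?_⟩
  set P : PowerSeries ℂ := PowerSeries.map Complex.ofRealHom (negBinom (-α) - PowerSeries.C lam)
    with hP
  have hFsum (z : ℂ) (hz : ‖z‖ < 1) : HasSum (fun n => PowerSeries.coeff n P * z ^ n) (F z) := by
    have h1 := (hasSum_one_sub_cpow α hz).sub (hasSum_ite_eq 0 (lam : ℂ))
    refine hasSum_of_eq h1 fun n => ?_
    rw [hP, PowerSeries.coeff_map, map_sub, PowerSeries.coeff_C, negBinom, PowerSeries.coeff_mk]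
    by_cases hn : n = 0
    · simp [hn]
    · simp [hn]
  have hprod (z : ℂ) (hz : ‖z‖ < 1) :
      HasSum (fun n => PowerSeries.coeff n (P * PowerSeries.mk g) * z ^ n) (1 : ℂ) := by
    have hs1 := (hFsum z hz).summable.norm
    have hs2 := (hGsum z hz).summable.norm
    have h1 := tsum_mul_tsum_eq_tsum_sum_antidiagonal_of_summable_norm hs1 hs2
    have h2 := (summable_norm_sum_mul_antidiagonal_of_summable_norm hs1 hs2).of_norm.hasSum
    rw [← h1, (hFsum z hz).tsum_eq, (hGsum z hz).tsum_eq,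
      mul_inv_cancel₀ (hFne hz.le)] at h2
    refine hasSum_of_eq h2 fun n => ?_
    rw [PowerSeries.coeff_mul, Finset.sum_mul]
    refine Finset.sum_congr rfl fun x hx => ?_
    rw [← Finset.HasAntidiagonal.mem_antidiagonal.1 hx, PowerSeries.coeff_mk, pow_add]
    ring
  -- Uniqueness of power series expansions: both sides expand the constant function `1`.
  have hball : ∀ᶠ z : ℂ in nhds 0, ‖z‖ < 1 := by
    filter_upwards [Metric.ball_mem_nhds (0 : ℂ) one_pos] with z hz
    simpa using hz
  have hA : HasFPowerSeriesAt (fun _ : ℂ => (1 : ℂ))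
      (FormalMultilinearSeries.ofScalars ℂ
        fun n => PowerSeries.coeff n (P * PowerSeries.mk g)) 0 := by
    rw [hasFPowerSeriesAt_iff]
    filter_upwards [hball] with z hz
    simpa [mul_comm] using hprod z hz
  have hB : HasFPowerSeriesAt (fun _ : ℂ => (1 : ℂ))
      (FormalMultilinearSeries.ofScalars ℂ
        fun n => PowerSeries.coeff n (1 : PowerSeries ℂ)) 0 := by
    rw [hasFPowerSeriesAt_iff]
    refine Filter.Eventually.of_forall fun z => ?_
    refine hasSum_of_eq (hasSum_ite_eq 0 (1 : ℂ)) fun n => ?_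
    by_cases hn : n = 0
    · simp [hn]
    · simp [hn, PowerSeries.coeff_one]
  have hAB := hA.eq_formalMultilinearSeries hB
  ext n
  have := congrArg (fun p => FormalMultilinearSeries.coeff p n) hAB
  simpa using this

/-! ### Conclusion -/

/-- for `1 < α < 2`, `-1 < λ < 0` and `0 < σ < α - 1`, the series
`∑_{k=1}^∞ ₐ∇ₖ^{-σ} F_{α,1}(λ,k+a,a)` converges and equals `0`. -/
theorem nabla_fracsum_discML_sum_zero (a : ℤ) (α : ℝ) (hα0 : 1 < α) (hα1 : α < 2)
    (lam : ℝ) (hlam0 : -1 < lam) (hlam1 : lam < 0)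
    (σ : ℝ) (hσ0 : 0 < σ) (hσ1 : σ < α - 1) :
    Summable (fun k : ℕ => nsum a σ (fun m => discML α 1 lam m a) (a + 1 + k)) ∧
    (∑' k : ℕ, nsum a σ (fun m => discML α 1 lam m a) (a + 1 + k)) = 0 := by
  have hlam : |lam| < 1 := abs_lt.2 ⟨hlam0, by linarith⟩
  obtain ⟨H, hH⟩ : ∃ H, H = negBinom σ * mlSeries α lam := ⟨_, rfl⟩
  simp only [nsum_eq_coeff (by linarith : 0 < α) hσ0, ← hH]
  obtain ⟨s, hs⟩ : ∃ s, s = α - 1 - σ := ⟨_, rfl⟩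
  have hfun : (negBinom (-α) - PowerSeries.C lam) * H = negBinom (-s) := by
    rw [show -s = σ + (1 - α) by rw [hs]; ring, negBinom_add, hH]
    linear_combination negBinom σ * negBinom_mul_mlSeries α hlam
  obtain ⟨g, hg, hinv⟩ := exists_summable_inverse hα0 hα1 hlam1
  have hHg : PowerSeries.map Complex.ofRealHom H =
      PowerSeries.mk g * PowerSeries.map Complex.ofRealHom (negBinom (-s)) := by
    rw [← hfun, map_mul]
    linear_combination (-PowerSeries.map Complex.ofRealHom H) * hinv
  let b : ℕ → ℂ := fun n => ((Ring.multichoose (-s) n : ℝ) : ℂ)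
  have hb : HasSum b 0 := by
    have := hasSum_multichoose_neg (s := s) (by linarith) (by linarith)
    simpa [b] using Complex.hasSum_ofReal.2 this
  have hcoef (k : ℕ) : ((PowerSeries.coeff k H : ℝ) : ℂ) =
      ∑ x ∈ Finset.HasAntidiagonal.antidiagonal k, g x.1 * b x.2 := by
    have := congrArg (PowerSeries.coeff k) hHg
    rw [PowerSeries.coeff_mul, PowerSeries.coeff_map] at this
    simpa [negBinom, b] using this
  have hsum := (summable_norm_sum_mul_antidiagonal_of_summable_norm hg hb.summable.norm).of_norm
  have htsum := tsum_mul_tsum_eq_tsum_sum_antidiagonal_of_summable_norm hg hb.summable.norm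
  rw [hb.tsum_eq, mul_zero] at htsum
  simp only [← hcoef] at hsum htsum
  refine ⟨Complex.summable_ofReal.1 hsum, ?_⟩
  rw [← Complex.ofReal_tsum] at htsum
  exact_mod_cast htsum.symm
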